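/- Divergence formula for the linearised operator when H is a multiple of the identity (Lemma 3.1, identity (15')). Let Ω ⊆ ℝⁿ be a domain with n ≥ 3, let u ∈ C³(Ω), let H₂ : Ω×ℝ×ℝⁿ → ℝ be C¹ and set H(x,z,ξ) := H₂(x,z,ξ) I, and let 2 ≤ k ≤ n. Then at every point of Ω and for every index j, Σ_i ∂_i(F[u]^{ij}) = −(n−k+1) Σ_i ∂_i(H₂[u]) · T_{k−2}(A_H[u])^{ij}, where H₂[u](x) := H₂(x,u(x),∇u(x)) and ∂_i denotes the i-th partial derivative of the indicated composite function of x. -/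

import Mathlib

open MeasureTheory Metric Set Matrix

noncomputable section

/-- The `k`-th elementary symmetric polynomial of the eigenvalues of an `n × n` real
matrix, defined via the coefficients of the characteristic polynomial. -/
def esymmMat {n : ℕ} (k : ℕ) (A : Matrix (Fin n) (Fin n) ℝ) : ℝ :=
  (-1 : ℝ) ^ k * A.charpoly.coeff (n - k)

/-- `λ(A) ∈ Γ_k^+`, i.e. `σ_j(A) > 0` for all `1 ≤ j ≤ k`. -/
def GammaPlus {n : ℕ} (k : ℕ) (A : Matrix (Fin n) (Fin n) ℝ) : Prop :=
  ∀ j : ℕ, 1 ≤ j → j ≤ k → 0 < esymmMat j A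

/-- The Newton tensors `T_0(A) = I`, `T_j(A) = σ_j(A) I - T_{j-1}(A) A`. -/
def newtonT {n : ℕ} : ℕ → Matrix (Fin n) (Fin n) ℝ → Matrix (Fin n) (Fin n) ℝ
  | 0, _ => 1
  | (j + 1), A => esymmMat (j + 1) A • (1 : Matrix (Fin n) (Fin n) ℝ) - newtonT j A * A

/-- `i`-th partial derivative. -/
def pd {n : ℕ} (i : Fin n) (w : (Fin n → ℝ) → ℝ) (x : Fin n → ℝ) : ℝ :=
  fderiv ℝ w x (Pi.single i 1)

/-- Gradient as a vector. -/
def grad {n : ℕ} (w : (Fin n → ℝ) → ℝ) (x : Fin n → ℝ) : Fin n → ℝ :=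
  fun i => pd i w x

/-- Hessian matrix. -/
def hess {n : ℕ} (w : (Fin n → ℝ) → ℝ) (x : Fin n → ℝ) : Matrix (Fin n) (Fin n) ℝ :=
  Matrix.of fun i j => pd i (pd j w) x

/-- Squared Euclidean norm of a vector. -/
def normSq {n : ℕ} (ξ : Fin n → ℝ) : ℝ := ∑ i, ξ i ^ 2

/-- Euclidean norm of a vector. -/
def vnorm {n : ℕ} (ξ : Fin n → ℝ) : ℝ := Real.sqrt (∑ i, ξ i ^ 2)

/-- Operator norm of a matrix, viewed as a linear map between Euclidean spaces. -/
def matNorm {n : ℕ} (M : Matrix (Fin n) (Fin n) ℝ) : ℝ :=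
  ‖LinearMap.toContinuousLinearMap (Matrix.toEuclideanLin M)‖

/-- Laplacian. -/
def lapl {n : ℕ} (w : (Fin n → ℝ) → ℝ) (x : Fin n → ℝ) : ℝ := ∑ l, pd l (pd l w) x

/-- `W^{2,p}` norm (with classical derivatives) on a set. -/
def W2pNorm {n : ℕ} (p : ℝ) (w : (Fin n → ℝ) → ℝ) (B : Set (Fin n → ℝ)) : ℝ :=
  (∫ x in B, (|w x| ^ p + vnorm (grad w x) ^ p + matNorm (hess w x) ^ p)) ^ (1 / p)

/-- `C^{1,1}_loc` on a set: continuously differentiable with locally Lipschitz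
first derivatives. -/
def C11On {E F : Type*} [NormedAddCommGroup E] [NormedSpace ℝ E]
    [NormedAddCommGroup F] [NormedSpace ℝ F] (f : E → F) (s : Set E) : Prop :=
  ContDiffOn ℝ 1 f s ∧
    ∀ x ∈ s, ∃ (K : NNReal) (t : Set E), t ∈ nhdsWithin x s ∧
      LipschitzOnWith K (fderivWithin ℝ f s) t

/-- First order difference quotient `∇_l^h`. -/
def dq {n : ℕ} (l : Fin n) (h : ℝ) (w : (Fin n → ℝ) → ℝ) (x : Fin n → ℝ) : ℝ :=
  (w (x + h • (Pi.single l 1 : Fin n → ℝ)) - w x) / h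

/-- Second order difference quotient `Δ_{ll}^h`. -/
def ddq {n : ℕ} (l : Fin n) (h : ℝ) (w : (Fin n → ℝ) → ℝ) (x : Fin n → ℝ) : ℝ :=
  (w (x + h • (Pi.single l 1 : Fin n → ℝ)) - 2 * w x + w (x - h • (Pi.single l 1 : Fin n → ℝ))) / h ^ 2

/-- `L^s` seminorm (as an extended real number) of a function on a set. -/
def lpN {n : ℕ} (s : ℝ) (w : (Fin n → ℝ) → ℝ) (S : Set (Fin n → ℝ)) : ENNReal :=
  (∫⁻ x in S, ENNReal.ofReal (|w x| ^ s)) ^ (1 / s)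

end

/-- Jacobi's formula. -/
theorem jacobi_det {E : Type*} [NormedAddCommGroup E] [NormedSpace ℝ E] {n : ℕ}
    (M : E → Matrix (Fin n) (Fin n) ℝ) (x : E)
    (hM : ∀ i j, DifferentiableAt ℝ (fun y => M y i j) x) (v : E) :
    DifferentiableAt ℝ (fun y => (M y).det) x ∧
    fderiv ℝ (fun y => (M y).det) x v =
      ∑ i, ∑ j, (M x).adjugate j i * fderiv ℝ (fun y => M y i j) x v := by
  let f : ContinuousMultilinearMap ℝ (fun _ : Fin n => (Fin n → ℝ)) ℝ :=
    { (Matrix.detRowAlternating (n := Fin n) (R := ℝ)).toMultilinearMap with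
      cont := by
        exact Continuous.matrix_det (A := fun m : Fin n → Fin n → ℝ => (m : Matrix (Fin n) (Fin n) ℝ)) continuous_id }
  have hf : ∀ m : Fin n → Fin n → ℝ, f m = Matrix.det (m : Matrix (Fin n) (Fin n) ℝ) := fun m => rfl
  have hg : ∀ i, HasFDerivAt (fun y => M y i)
      (ContinuousLinearMap.pi fun j => fderiv ℝ (fun y => M y i j) x) x := by
    intro i
    rw [hasFDerivAt_pi]
    intro j
    exact (hM i j).hasFDerivAt
  have := HasFDerivAt.multilinear_comp f hg
  have h2 : HasFDerivAt (fun y => (M y).det) _ x := this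
  refine ⟨h2.differentiableAt, ?_⟩
  rw [h2.fderiv]
  simp only [ContinuousLinearMap.sum_apply, ContinuousLinearMap.comp_apply]
  refine Finset.sum_congr rfl fun i _ => ?_
  set w : Fin n → ℝ := fun j => fderiv ℝ (fun y => M y i j) x v with hw
  have e1 : (f.toContinuousLinearMap (fun j => M x j) i)
      ((ContinuousLinearMap.pi fun j => fderiv ℝ (fun y => M y i j) x) v)
      = ((M x).updateRow i w).det := rfl
  rw [e1, ← Matrix.cramer_transpose_apply, Matrix.cramer_eq_adjugate_mulVec, Matrix.mulVec, dotProduct]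
  refine Finset.sum_congr rfl fun j _ => ?_
  rw [← Matrix.adjugate_transpose]
  rfl

/-- The coefficients of the adjugate of the characteristic matrix. -/
noncomputable def adjPoly {n : ℕ} (A : Matrix (Fin n) (Fin n) ℝ) :
    Polynomial (Matrix (Fin n) (Fin n) ℝ) :=
  matPolyEquiv (Matrix.adjugate (Matrix.charmatrix A))

theorem adjPoly_mul {n : ℕ} (A : Matrix (Fin n) (Fin n) ℝ) :
    adjPoly A * (Polynomial.X - Polynomial.C A) =
      A.charpoly.map (algebraMap ℝ (Matrix (Fin n) (Fin n) ℝ)) := by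
  rw [adjPoly, ← Matrix.matPolyEquiv_charmatrix, ← map_mul, Matrix.adjugate_mul,
    ← matPolyEquiv_smul_one]
  rfl

theorem adjPoly_coeff_succ {n : ℕ} (A : Matrix (Fin n) (Fin n) ℝ) (m : ℕ) :
    (adjPoly A).coeff m =
      A.charpoly.coeff (m + 1) • (1 : Matrix (Fin n) (Fin n) ℝ) + (adjPoly A).coeff (m + 1) * A := by
  have h := congrArg (fun p => Polynomial.coeff p (m + 1)) (adjPoly_mul A)
  simp only [mul_sub, Polynomial.coeff_sub, Polynomial.coeff_mul_X, Polynomial.coeff_mul_C,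
    Polynomial.coeff_map, Algebra.algebraMap_eq_smul_one] at h
  rw [← h]; abel

theorem adjPoly_coeff_ge {n : ℕ} (hn : 0 < n) (A : Matrix (Fin n) (Fin n) ℝ) :
    (adjPoly A).coeff n = 0 := by
  haveI : Nonempty (Fin n) := ⟨⟨0, hn⟩⟩
  haveI : Nontrivial (Matrix (Fin n) (Fin n) ℝ) := inferInstance
  have hd := congrArg Polynomial.natDegree (adjPoly_mul A)
  rw [(A.charpoly_monic).natDegree_map, Matrix.charpoly_natDegree_eq_dim, Fintype.card_fin] at hd
  apply Polynomial.coeff_eq_zero_of_natDegree_lt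
  by_cases h0 : adjPoly A = 0
  · rw [h0]; simpa using hn
  · have hm : (Polynomial.X - Polynomial.C A).Monic := Polynomial.monic_X_sub_C A
    rw [Polynomial.natDegree_mul' (by
      rw [hm.leadingCoeff, mul_one]; exact Polynomial.leadingCoeff_ne_zero.2 h0), Polynomial.natDegree_X_sub_C] at hd
    omega

theorem adjPoly_newton {n : ℕ} (hn : 0 < n) (A : Matrix (Fin n) (Fin n) ℝ) (j : ℕ) (hj : j + 1 ≤ n) :
    (adjPoly A).coeff (n - 1 - j) = (-1 : ℝ) ^ j • newtonT j A := by
  induction j with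
  | zero =>
    rw [adjPoly_coeff_succ, show n - 1 - 0 + 1 = n by omega, adjPoly_coeff_ge hn]
    have : A.charpoly.coeff n = 1 := by
      have := A.charpoly_monic
      rw [Polynomial.Monic, Polynomial.leadingCoeff, Matrix.charpoly_natDegree_eq_dim,
        Fintype.card_fin] at this
      exact this
    simp [this, newtonT]
  | succ j ih =>
    rw [adjPoly_coeff_succ, show n - 1 - (j + 1) + 1 = n - 1 - j by omega, ih (by omega), newtonT,
      esymmMat, show n - (j + 1) = n - 1 - j by omega, smul_sub, smul_smul, ← mul_assoc, ← mul_pow]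
    simp only [mul_neg, mul_one, neg_neg, one_pow, one_mul, smul_mul_assoc, pow_succ, neg_smul,
      sub_neg_eq_add]

theorem adjPoly_eval {n : ℕ} (A : Matrix (Fin n) (Fin n) ℝ) (t : ℝ) (a b : Fin n) :
    (Matrix.scalar (Fin n) t - A).adjugate a b =
      ((Matrix.charmatrix A).adjugate a b).eval t := by
  have h : (Polynomial.evalRingHom t).mapMatrix (Matrix.charmatrix A) = Matrix.scalar (Fin n) t - A := by
    ext i j
    by_cases hij : i = j
    · subst hij; simp
    · simp [hij]
  rw [← h, ← RingHom.map_adjugate]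
  rfl

theorem adjPoly_coeff_apply {n : ℕ} (A : Matrix (Fin n) (Fin n) ℝ) (m : ℕ) (a b : Fin n) :
    ((Matrix.charmatrix A).adjugate a b).coeff m = (adjPoly A).coeff m a b := by
  rw [adjPoly, matPolyEquiv_coeff_apply]

theorem trace_adjPoly {n : ℕ} (A : Matrix (Fin n) (Fin n) ℝ) (m : ℕ) :
    ((adjPoly A).coeff m).trace = (m + 1 : ℝ) * A.charpoly.coeff (m + 1) := by
  have key : (∑ i, (Matrix.charmatrix A).adjugate i i) = Polynomial.derivative A.charpoly := by
    apply Polynomial.funext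
    intro t
    have hM : ∀ i j, DifferentiableAt ℝ (fun s : ℝ => (Matrix.scalar (Fin n) s - A) i j) t := by
      intro i j
      by_cases hij : i = j
      · subst hij; simp
      · simp [hij]
    have hj := (jacobi_det (fun s : ℝ => Matrix.scalar (Fin n) s - A) t hM 1).2
    have e : (fun s : ℝ => (Matrix.scalar (Fin n) s - A).det) = fun s => A.charpoly.eval s := by
      funext s; rw [Matrix.eval_charpoly]
    rw [e] at hj
    have hd : fderiv ℝ (fun s => A.charpoly.eval s) t 1 = (Polynomial.derivative A.charpoly).eval t := by
      rw [fderiv_apply_one_eq_deriv, Polynomial.deriv]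
    rw [← hd, hj, Polynomial.eval_finset_sum]
    refine Finset.sum_congr rfl fun i _ => ?_
    rw [Finset.sum_eq_single i]
    · rw [adjPoly_eval]; simp
    · intro j _ hij
      simp [hij.symm]
    · simp
  have := congrArg (fun p => Polynomial.coeff p m) key
  simp only [Polynomial.finset_sum_coeff, adjPoly_coeff_apply, Polynomial.coeff_derivative] at this
  rw [Matrix.trace]
  simp only [Matrix.diag]
  rw [this]; ring

theorem trace_newtonT {n : ℕ} (hn : 0 < n) (A : Matrix (Fin n) (Fin n) ℝ) (j : ℕ) (hj : j + 1 ≤ n) :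
    (newtonT j A).trace = ((n : ℝ) - j) * esymmMat j A := by
  have h := trace_adjPoly A (n - 1 - j)
  rw [adjPoly_newton hn A j hj, Matrix.trace_smul, show n - 1 - j + 1 = n - j by omega] at h
  have hc : ((n - 1 - j : ℕ) : ℝ) + 1 = (n : ℝ) - j := by
    have : n - 1 - j + (1 + j) = n := by omega
    have h2 : ((n - 1 - j : ℕ) : ℝ) + (1 + j) = n := by exact_mod_cast this
    linarith
  rw [hc, smul_eq_mul] at h
  have hs : ((-1 : ℝ) ^ j) * (-1) ^ j = 1 := by rw [← mul_pow]; simp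
  rw [esymmMat]
  calc (newtonT j A).trace = ((-1 : ℝ) ^ j * (-1) ^ j) * (newtonT j A).trace := by rw [hs, one_mul]
    _ = (-1) ^ j * ((-1) ^ j * (newtonT j A).trace) := by ring
    _ = _ := by rw [h]; ring

theorem differentiableAt_charpoly_coeff {E : Type*} [NormedAddCommGroup E] [NormedSpace ℝ E] {n : ℕ}
    (A : E → Matrix (Fin n) (Fin n) ℝ) (x : E)
    (hA : ∀ i j, DifferentiableAt ℝ (fun y => A y i j) x) (m : ℕ) :
    DifferentiableAt ℝ (fun y => (A y).charpoly.coeff m) x := by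
  let p := (Matrix.charpoly.univ ℝ (Fin n)).coeff m
  have h1 : ∀ y, (A y).charpoly.coeff m = MvPolynomial.eval (fun q : Fin n × Fin n => A y q.1 q.2) p := by
    intro y
    have := Matrix.charpoly.univ_coeff_eval₂Hom (n := Fin n) (RingHom.id ℝ) (fun q : Fin n × Fin n => A y q.1 q.2) m
    exact this.symm
  simp only [h1]
  have h2 := AnalyticOnNhd.eval_mvPolynomial (𝕜 := ℝ) (σ := Fin n × Fin n) p
  have h3 : DifferentiableAt ℝ (fun y => (fun q : Fin n × Fin n => A y q.1 q.2)) x :=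
    differentiableAt_pi.2 fun q => hA q.1 q.2
  exact (h2 _ (Set.mem_univ _)).differentiableAt.comp x h3

theorem fderiv_charpoly_coeff {E : Type*} [NormedAddCommGroup E] [NormedSpace ℝ E] {n : ℕ}
    (A : E → Matrix (Fin n) (Fin n) ℝ) (x : E)
    (hA : ∀ i j, DifferentiableAt ℝ (fun y => A y i j) x) (m : ℕ) (hm : m ≤ n) (v : E) :
    fderiv ℝ (fun y => (A y).charpoly.coeff m) x v =
      - ∑ i, ∑ j, (adjPoly (A x)).coeff m j i * fderiv ℝ (fun y => A y i j) x v := by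
  let p : Polynomial ℝ := ∑ l ∈ Finset.range (n + 1),
    Polynomial.monomial l (fderiv ℝ (fun y => (A y).charpoly.coeff l) x v)
  let q : Polynomial ℝ := - ∑ i, ∑ j, (Matrix.charmatrix (A x)).adjugate j i *
    Polynomial.C (fderiv ℝ (fun y => A y i j) x v)
  have hpq : p = q := by
    apply Polynomial.funext
    intro t
    have hM : ∀ i j, DifferentiableAt ℝ (fun y => (Matrix.scalar (Fin n) t - A y) i j) x := by
      intro i j
      simp only [Matrix.sub_apply]
      exact (differentiableAt_const _).sub (hA i j)
    have hj := (jacobi_det (fun y => Matrix.scalar (Fin n) t - A y) x hM v).2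
    have e : (fun y => (Matrix.scalar (Fin n) t - A y).det) =
        fun y => ∑ l ∈ Finset.range (n + 1), (A y).charpoly.coeff l * t ^ l := by
      funext y
      rw [← Matrix.eval_charpoly, Polynomial.eval_eq_sum_range, Matrix.charpoly_natDegree_eq_dim,
        Fintype.card_fin]
    rw [e] at hj
    have hl : fderiv ℝ (fun y => ∑ l ∈ Finset.range (n + 1), (A y).charpoly.coeff l * t ^ l) x v
        = p.eval t := by
      rw [fderiv_fun_sum (fun l _ => (differentiableAt_charpoly_coeff A x hA l).mul_const _)]
      simp only [p, Polynomial.eval_finset_sum, Polynomial.eval_monomial, ContinuousLinearMap.sum_apply]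
      refine Finset.sum_congr rfl fun l _ => ?_
      rw [fderiv_mul_const (differentiableAt_charpoly_coeff A x hA l)]
      simp [mul_comm]
    rw [← hl, hj]
    simp only [q, Polynomial.eval_neg, Polynomial.eval_finset_sum, Polynomial.eval_mul,
      Polynomial.eval_C, ← Finset.sum_neg_distrib]
    refine Finset.sum_congr rfl fun i _ => Finset.sum_congr rfl fun j _ => ?_
    rw [adjPoly_eval]
    simp only [Matrix.sub_apply]
    rw [fderiv_const_sub]
    simp
  have h := congrArg (fun r => Polynomial.coeff r m) hpq
  simp only [p, q, Polynomial.finset_sum_coeff, Polynomial.coeff_monomial, Polynomial.coeff_neg,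
    Polynomial.coeff_mul_C, adjPoly_coeff_apply] at h
  rw [Finset.sum_eq_single m] at h
  · simpa using h
  · intro b _ hb; simp [hb]
  · intro hh; exact absurd (Finset.mem_range.2 (by omega)) hh

theorem differentiableAt_esymmMat {E : Type*} [NormedAddCommGroup E] [NormedSpace ℝ E] {n : ℕ}
    (A : E → Matrix (Fin n) (Fin n) ℝ) (x : E)
    (hA : ∀ i j, DifferentiableAt ℝ (fun y => A y i j) x) (m : ℕ) :
    DifferentiableAt ℝ (fun y => esymmMat m (A y)) x := by
  unfold esymmMat
  exact (differentiableAt_charpoly_coeff A x hA _).const_mul _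

theorem fderiv_esymmMat {E : Type*} [NormedAddCommGroup E] [NormedSpace ℝ E] {n : ℕ}
    (A : E → Matrix (Fin n) (Fin n) ℝ) (x : E)
    (hA : ∀ i j, DifferentiableAt ℝ (fun y => A y i j) x) (m : ℕ) (hm : m + 1 ≤ n) (v : E) :
    fderiv ℝ (fun y => esymmMat (m + 1) (A y)) x v =
      ∑ i, ∑ j, newtonT m (A x) j i * fderiv ℝ (fun y => A y i j) x v := by
  unfold esymmMat
  rw [fderiv_const_mul (differentiableAt_charpoly_coeff A x hA _), ContinuousLinearMap.smul_apply,
    fderiv_charpoly_coeff A x hA _ (by omega), show n - (m + 1) = n - 1 - m by omega,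
    adjPoly_newton (by omega) _ _ hm]
  have hs : ((-1 : ℝ) ^ (m + 1)) * (-1) ^ m = -1 := by rw [pow_succ, mul_right_comm, ← mul_pow]; simp
  rw [smul_eq_mul, ← Finset.sum_neg_distrib, Finset.mul_sum]
  refine Finset.sum_congr rfl fun i _ => ?_
  rw [← Finset.sum_neg_distrib, Finset.mul_sum]
  refine Finset.sum_congr rfl fun j _ => ?_
  rw [Matrix.smul_apply, smul_eq_mul]
  linear_combination (-newtonT m (A x) j i * fderiv ℝ (fun y => A y i j) x v) * hs

theorem differentiableAt_newtonT {E : Type*} [NormedAddCommGroup E] [NormedSpace ℝ E] {n : ℕ}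
    (A : E → Matrix (Fin n) (Fin n) ℝ) (x : E)
    (hA : ∀ i j, DifferentiableAt ℝ (fun y => A y i j) x) (m : ℕ) :
    ∀ i j, DifferentiableAt ℝ (fun y => newtonT m (A y) i j) x := by
  induction m with
  | zero => intro i j; simp [newtonT]
  | succ m ih =>
    intro i j
    simp only [newtonT, Matrix.sub_apply, Matrix.smul_apply, Matrix.mul_apply, smul_eq_mul]
    refine DifferentiableAt.sub ((differentiableAt_esymmMat A x hA _).mul_const _) ?_
    exact DifferentiableAt.fun_sum fun l _ => (ih i l).mul (hA l j)

theorem newton_div_step {n : ℕ} (A : (Fin n → ℝ) → Matrix (Fin n) (Fin n) ℝ) (x : Fin n → ℝ)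
    (g : Fin n → ℝ)
    (hA : ∀ i j, DifferentiableAt ℝ (fun y => A y i j) x)
    (hc : ∀ i j l, pd i (fun y => A y l j) x + g i * (1 : Matrix (Fin n) (Fin n) ℝ) l j
      = pd j (fun y => A y l i) x + g j * (1 : Matrix (Fin n) (Fin n) ℝ) l i)
    (m : ℕ) (hm : m + 1 ≤ n) (j : Fin n) :
    ∑ i, pd i (fun y => newtonT (m + 1) (A y) i j) x =
      - ∑ l, (∑ i, pd i (fun y => newtonT m (A y) i l) x) * A x l j
      - ((n : ℝ) - m) * esymmMat m (A x) * g j + ∑ i, g i * newtonT m (A x) i j := by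
  have hT := differentiableAt_newtonT A x hA m
  have h1 : ∀ i, pd i (fun y => newtonT (m + 1) (A y) i j) x =
      pd i (fun y => esymmMat (m + 1) (A y)) x * (1 : Matrix (Fin n) (Fin n) ℝ) i j
      - ∑ l, (pd i (fun y => newtonT m (A y) i l) x * A x l j
        + newtonT m (A x) i l * pd i (fun y => A y l j) x) := by
    intro i
    simp only [newtonT, Matrix.sub_apply, Matrix.smul_apply, Matrix.mul_apply, smul_eq_mul, pd]
    rw [fderiv_fun_sub ((differentiableAt_esymmMat A x hA _).mul_const _)
      (DifferentiableAt.fun_sum fun l _ => (hT i l).fun_mul (hA l j)),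
      fderiv_mul_const (differentiableAt_esymmMat A x hA _),
      fderiv_fun_sum (fun l _ => (hT i l).fun_mul (hA l j))]
    simp only [ContinuousLinearMap.sub_apply, ContinuousLinearMap.smul_apply,
      ContinuousLinearMap.sum_apply, smul_eq_mul]
    congr 1
    · ring
    · refine Finset.sum_congr rfl fun l _ => ?_
      rw [fderiv_fun_mul (hT i l) (hA l j)]
      simp only [ContinuousLinearMap.add_apply, ContinuousLinearMap.smul_apply, smul_eq_mul]
      ring
  simp only [h1]
  rw [Finset.sum_sub_distrib]
  have h2 : ∑ i, pd i (fun y => esymmMat (m + 1) (A y)) x * (1 : Matrix (Fin n) (Fin n) ℝ) i j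
      = ∑ l, ∑ i, newtonT m (A x) i l * pd j (fun y => A y l i) x := by
    rw [Finset.sum_eq_single j]
    · simp only [Matrix.one_apply_eq, mul_one]
      exact fderiv_esymmMat A x hA m hm _
    · intro b _ hb; simp [hb]
    · simp
  have htr := trace_newtonT (by omega) (A x) m hm
  rw [Matrix.trace] at htr
  have h3 : ∑ l, ∑ i, newtonT m (A x) i l * pd j (fun y => A y l i) x =
      ∑ l, ∑ i, newtonT m (A x) i l * pd i (fun y => A y l j) x
      + ∑ i, g i * newtonT m (A x) i j - (∑ i, newtonT m (A x) i i) * g j := by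
    have e : ∀ l i, newtonT m (A x) i l * pd j (fun y => A y l i) x =
        newtonT m (A x) i l * pd i (fun y => A y l j) x
        + newtonT m (A x) i l * g i * (1 : Matrix (Fin n) (Fin n) ℝ) l j
        - newtonT m (A x) i l * g j * (1 : Matrix (Fin n) (Fin n) ℝ) l i := by
      intro l i
      linear_combination (-newtonT m (A x) i l) * hc i j l
    simp only [e, Finset.sum_sub_distrib, Finset.sum_add_distrib]
    congr 1
    · congr 1
      rw [Finset.sum_comm]
      refine Finset.sum_congr rfl fun i _ => ?_
      simp [Matrix.one_apply, mul_comm]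
    · rw [Finset.sum_mul]
      refine Finset.sum_congr rfl fun i _ => ?_
      simp [Matrix.one_apply]
  have h4 : ∑ i, ∑ l, (pd i (fun y => newtonT m (A y) i l) x * A x l j
        + newtonT m (A x) i l * pd i (fun y => A y l j) x) =
      ∑ l, (∑ i, pd i (fun y => newtonT m (A y) i l) x) * A x l j
      + ∑ l, ∑ i, newtonT m (A x) i l * pd i (fun y => A y l j) x := by
    rw [Finset.sum_comm, ← Finset.sum_add_distrib]
    refine Finset.sum_congr rfl fun l _ => ?_
    rw [Finset.sum_add_distrib, Finset.sum_mul]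
  rw [h2, h3, h4]
  simp only [Matrix.diag] at htr
  rw [htr]
  ring

theorem newton_div {n : ℕ} (A : (Fin n → ℝ) → Matrix (Fin n) (Fin n) ℝ) (x : Fin n → ℝ)
    (g : Fin n → ℝ)
    (hA : ∀ i j, DifferentiableAt ℝ (fun y => A y i j) x)
    (hc : ∀ i j l, pd i (fun y => A y l j) x + g i * (1 : Matrix (Fin n) (Fin n) ℝ) l j
      = pd j (fun y => A y l i) x + g j * (1 : Matrix (Fin n) (Fin n) ℝ) l i)
    (m : ℕ) (hm : m + 1 ≤ n) : ∀ j : Fin n,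
    ∑ i, pd i (fun y => newtonT (m + 1) (A y) i j) x =
      - ((n : ℝ) - (m + 1)) * ∑ i, g i * newtonT m (A x) i j := by
  induction m with
  | zero =>
    intro j
    rw [newton_div_step A x g hA hc 0 hm j]
    have h0 : esymmMat 0 (A x) = 1 := by
      have := (A x).charpoly_monic
      rw [Polynomial.Monic, Polynomial.leadingCoeff, Matrix.charpoly_natDegree_eq_dim,
        Fintype.card_fin] at this
      simp [esymmMat, this]
    have h1 : ∀ i l : Fin n, pd i (fun y => newtonT 0 (A y) i l) x = 0 := by
      intro i l; simp [newtonT, pd]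
    have h2 : ∑ i, g i * newtonT 0 (A x) i j = g j := by
      simp [newtonT, Matrix.one_apply]
    simp only [h1, h0, h2]
    simp
    ring
  | succ m ih =>
    intro j
    rw [newton_div_step A x g hA hc (m + 1) hm j]
    have h1 : ∑ l, (∑ i, pd i (fun y => newtonT (m + 1) (A y) i l) x) * A x l j
        = - ((n : ℝ) - (m + 1)) * (esymmMat (m + 1) (A x) * g j
          - ∑ i, g i * newtonT (m + 1) (A x) i j) := by
      simp only [ih (by omega)]
      have h2 : ∀ i, ∑ l, newtonT m (A x) i l * A x l j =
          esymmMat (m + 1) (A x) * (1 : Matrix (Fin n) (Fin n) ℝ) i j - newtonT (m + 1) (A x) i j := by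
        intro i
        simp [newtonT, Matrix.mul_apply]
      have h3 : ∑ i, g i * (esymmMat (m + 1) (A x) * (1 : Matrix (Fin n) (Fin n) ℝ) i j)
          = esymmMat (m + 1) (A x) * g j := by
        simp [Matrix.one_apply, mul_comm]
      rw [← h3, ← Finset.sum_sub_distrib]
      simp only [← mul_sub, ← h2]
      simp only [mul_assoc, ← Finset.mul_sum, Finset.sum_mul]
      rw [Finset.sum_comm]
      simp only [← Finset.mul_sum, mul_assoc]
    rw [h1]
    push_cast
    ring

theorem contDiffOn_pd {n : ℕ} {Ω : Set (Fin n → ℝ)} (hΩ : IsOpen Ω) {w : (Fin n → ℝ) → ℝ}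
    (m : ℕ) (hw : ContDiffOn ℝ (m + 1) w Ω) (i : Fin n) : ContDiffOn ℝ m (pd i w) Ω := by
  have := hw.fderiv_of_isOpen hΩ (m := m) le_rfl
  exact this.clm_apply contDiffOn_const

theorem pd_comm {n : ℕ} {Ω : Set (Fin n → ℝ)} (hΩ : IsOpen Ω) {w : (Fin n → ℝ) → ℝ}
    (hw : ContDiffOn ℝ 2 w Ω) {x : Fin n → ℝ} (hx : x ∈ Ω) (i j : Fin n) :
    pd i (pd j w) x = pd j (pd i w) x := by
  have hat : ContDiffAt ℝ 2 w x := hw.contDiffAt (hΩ.mem_nhds hx)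
  have hs := hat.isSymmSndFDerivAt (by simp)
  have hd : DifferentiableAt ℝ (fderiv ℝ w) x :=
    (hat.fderiv_right (m := 1) (by norm_num)).differentiableAt (by norm_num)
  have e : ∀ a b : Fin n, pd a (pd b w) x = fderiv ℝ (fderiv ℝ w) x (Pi.single a 1) (Pi.single b 1) := by
    intro a b
    have : pd b w = fun y => fderiv ℝ w y (Pi.single b 1) := rfl
    rw [pd, this, fderiv_clm_apply hd (differentiableAt_const _)]
    simp
  rw [e, e]
  exact hs _ _

theorem pd_congr {n : ℕ} {Ω : Set (Fin n → ℝ)} (hΩ : IsOpen Ω) {v w : (Fin n → ℝ) → ℝ}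
    (h : ∀ y ∈ Ω, v y = w y) {x : Fin n → ℝ} (hx : x ∈ Ω) (i : Fin n) : pd i v x = pd i w x := by
  have : v =ᶠ[nhds x] w := Filter.eventually_of_mem (hΩ.mem_nhds hx) h
  rw [pd, pd, this.fderiv_eq]

/-- Divergence formula for the linearised operator when `H` is a
multiple of the identity (Lemma 3.1, identity (15')). -/
theorem divergence_formula_linearised_operator_scalarH
    {n : ℕ} (hn : 3 ≤ n) (k : ℕ) (hk2 : 2 ≤ k) (hkn : k ≤ n)
    (Ω : Set (Fin n → ℝ)) (hΩ : IsOpen Ω)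
    (u : (Fin n → ℝ) → ℝ) (hu : ContDiffOn ℝ 3 u Ω)
    (H₂ : ((Fin n → ℝ) × ℝ × (Fin n → ℝ)) → ℝ)
    (hH₂ : ContDiffOn ℝ 1 H₂ (Ω ×ˢ ((univ : Set ℝ) ×ˢ (univ : Set (Fin n → ℝ))))) :
    ∀ x ∈ Ω, ∀ j : Fin n,
      ∑ i, pd i (fun y => newtonT (k - 1)
          (hess u y - H₂ (y, u y, grad u y) • (1 : Matrix (Fin n) (Fin n) ℝ)) i j) x
        = -((n - k + 1 : ℕ) : ℝ) *
            ∑ i, pd i (fun y => H₂ (y, u y, grad u y)) x *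
              newtonT (k - 2)
                (hess u x - H₂ (x, u x, grad u x) • (1 : Matrix (Fin n) (Fin n) ℝ)) i j := by
  intro x hx j
  have hnb : Ω ∈ nhds x := hΩ.mem_nhds hx
  have hp2 : ∀ i, ContDiffOn ℝ 2 (pd i u) Ω := fun i => contDiffOn_pd hΩ 2 (by exact_mod_cast hu) i
  have hp1 : ∀ i l, ContDiffOn ℝ 1 (pd l (pd i u)) Ω := fun i l =>
    contDiffOn_pd hΩ 1 (by exact_mod_cast hp2 i) l
  have hh : DifferentiableAt ℝ (fun y => H₂ (y, u y, grad u y)) x := by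
    have hH : DifferentiableAt ℝ H₂ (x, u x, grad u x) := by
      have ho : IsOpen (Ω ×ˢ ((univ : Set ℝ) ×ˢ (univ : Set (Fin n → ℝ)))) :=
        hΩ.prod (isOpen_univ.prod isOpen_univ)
      exact (hH₂.contDiffAt (ho.mem_nhds ⟨hx, trivial, trivial⟩)).differentiableAt (by norm_num)
    have hg : DifferentiableAt ℝ (fun y => grad u y) x := by
      refine differentiableAt_pi.2 fun i => ?_
      exact ((hp2 i).contDiffAt hnb).differentiableAt (by norm_num)
    have hu1 : DifferentiableAt ℝ u x := (hu.contDiffAt hnb).differentiableAt (by norm_num)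
    have hin : DifferentiableAt ℝ (fun y => (y, u y, grad u y)) x :=
      differentiableAt_id.prodMk (hu1.prodMk hg)
    exact DifferentiableAt.comp (f := fun y => (y, u y, grad u y)) x hH hin
  have hpd : ∀ i l, DifferentiableAt ℝ (pd l (pd i u)) x := fun i l =>
    ((hp1 i l).contDiffAt hnb).differentiableAt (by norm_num)
  set A : (Fin n → ℝ) → Matrix (Fin n) (Fin n) ℝ := fun y =>
    hess u y - H₂ (y, u y, grad u y) • (1 : Matrix (Fin n) (Fin n) ℝ) with hAdef
  have hAe : ∀ i l, (fun y => A y i l) = fun y => pd i (pd l u) y -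
      H₂ (y, u y, grad u y) * (1 : Matrix (Fin n) (Fin n) ℝ) i l := by
    intro i l; rfl
  have hA : ∀ i l, DifferentiableAt ℝ (fun y => A y i l) x := by
    intro i l
    rw [hAe]
    exact (hpd l i).sub (hh.mul_const _)
  have hpA : ∀ a i l, pd a (fun y => A y i l) x = pd a (pd i (pd l u)) x -
      pd a (fun y => H₂ (y, u y, grad u y)) x * (1 : Matrix (Fin n) (Fin n) ℝ) i l := by
    intro a i l
    rw [hAe, pd, fderiv_fun_sub (hpd l i) (hh.mul_const _), fderiv_mul_const hh]
    simp [pd, mul_comm]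
  have hc : ∀ i j l, pd i (fun y => A y l j) x +
      pd i (fun y => H₂ (y, u y, grad u y)) x * (1 : Matrix (Fin n) (Fin n) ℝ) l j
      = pd j (fun y => A y l i) x +
      pd j (fun y => H₂ (y, u y, grad u y)) x * (1 : Matrix (Fin n) (Fin n) ℝ) l i := by
    intro i j l
    rw [hpA, hpA, sub_add_cancel, sub_add_cancel]
    have hu2 : ContDiffOn ℝ 2 u Ω := hu.of_le (by norm_num)
    rw [pd_congr hΩ (fun y hy => pd_comm hΩ hu2 hy l j) hx i,
      pd_comm hΩ (hp2 l) hx i j,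
      pd_congr hΩ (fun y hy => pd_comm hΩ hu2 hy i l) hx j]
  obtain ⟨m, rfl⟩ : ∃ m, k = m + 2 := ⟨k - 2, by omega⟩
  have := newton_div A x (fun i => pd i (fun y => H₂ (y, u y, grad u y)) x) hA hc m (by omega) j
  have hcast : ((n - (m + 2) + 1 : ℕ) : ℝ) = (n : ℝ) - (m + 1) := by
    have h : n - (m + 2) + 1 + (m + 1) = n := by omega
    have h2 : ((n - (m + 2) + 1 : ℕ) : ℝ) + (m + 1) = n := by exact_mod_cast h
    linarith
  rw [hcast]
  exact this
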